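/- Let X ∈ M(ℂ^n) be Hermitian with eigendecomposition X = ∑_i ξ_i |x_i⟩⟨x_i| (orthonormal eigenvectors), and let x₀ ∈ ℝ satisfy ∑_i max(ξ_i − x₀, 0) = 1. Then X' = ∑_i max(ξ_i − x₀, 0) |x_i⟩⟨x_i| is a minimizer of ‖X − X''‖₂ over all positive semidefinite trace-one matrices X'' ∈ M(ℂ^n); i.e., the water-filling construction gives the Frobenius-norm projection onto the set of density matrices. -/

import Mathlib

noncomputable section
open Matrix Kronecker BigOperators
open scoped ComplexOrder

/-- The Frobenius (Hilbert–Schmidt) norm `‖A‖₂ = √Tr(AᴴA)` of a complex matrix. -/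
def frobNorm {n : Type*} [Fintype n] (A : Matrix n n ℂ) : ℝ :=
  Real.sqrt (Matrix.trace (Aᴴ * A)).re

/-- The operator norm `‖A‖_∞` (largest singular value) of a complex matrix. -/
def opNorm {n : Type*} [Fintype n] [DecidableEq n] (A : Matrix n n ℂ) : ℝ :=
  ‖Matrix.toEuclideanCLM (𝕜 := ℂ) A‖

/-- The trace norm `‖A‖₁ = Tr √(AᴴA)` of a complex matrix. -/
def traceNorm {n : Type*} [Fintype n] [DecidableEq n] (A : Matrix n n ℂ) : ℝ :=
  open scoped MatrixOrder in (CFC.sqrt (Aᴴ * A)).trace.re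

/-- A density matrix: positive semidefinite with trace one. -/
def IsDensity {n : Type*} [Fintype n] (ρ : Matrix n n ℂ) : Prop :=
  ρ.PosSemidef ∧ ρ.trace = 1

/-- A density matrix `ρ` is `δ`-almost rank `r` if there is a density matrix of rank at most `r`
within operator-norm distance `δ` of it. -/
def AlmostRank {n : Type*} [Fintype n] [DecidableEq n] (r : ℕ) (δ : ℝ) (ρ : Matrix n n ℂ) : Prop :=
  ∃ σ : Matrix n n ℂ, IsDensity σ ∧ σ.rank ≤ r ∧ opNorm (ρ - σ) ≤ δ

/-- The rank-one (outer-product) matrix `|v⟩⟨v|`. -/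
def outer {n : Type*} (v : EuclideanSpace ℂ n) : Matrix n n ℂ :=
  Matrix.of fun i j => v i * (starRingEnd ℂ) (v j)

/-- Partial trace over the first tensor factor. -/
def ptrace1 {d : ℕ} (X : Matrix (Fin d × Fin d) (Fin d × Fin d) ℂ) : Matrix (Fin d) (Fin d) ℂ :=
  Matrix.of fun j j' => ∑ i, X (i, j) (i, j')

/-- Partial trace over the second tensor factor. -/
def ptrace2 {d : ℕ} (X : Matrix (Fin d × Fin d) (Fin d × Fin d) ℂ) : Matrix (Fin d) (Fin d) ℂ :=
  Matrix.of fun i i' => ∑ j, X (i, j) (i', j)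

/-- A family of `m` rank-one projectors, each given by a unit vector. -/
def IsRankOneProjFamily {d m : ℕ} (P : Fin m → Matrix (Fin d) (Fin d) ℂ) : Prop :=
  ∀ l, ∃ v : EuclideanSpace ℂ (Fin d), ‖v‖ = 1 ∧ P l = outer v

/-- Near-isotropy: `∑ l, Tr(P l · A) • P l = A + Tr(A) • 𝟙` for every `A`. -/
def NearIsotropic {d m : ℕ} (P : Fin m → Matrix (Fin d) (Fin d) ℂ) : Prop :=
  ∀ A : Matrix (Fin d) (Fin d) ℂ,
    ∑ l, Matrix.trace (P l * A) • P l = A + Matrix.trace A • (1 : Matrix (Fin d) (Fin d) ℂ)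

lemma sum_outer_eq {n : ℕ} (v : Fin n → EuclideanSpace ℂ (Fin n)) (c : Fin n → ℂ) :
    ∑ i, c i • outer (v i) =
      (Matrix.of fun i j => v j i) * Matrix.diagonal c * (Matrix.of fun i j => v j i)ᴴ := by
  ext a b
  rw [Matrix.mul_apply, Matrix.sum_apply]
  refine Finset.sum_congr rfl fun i _ => ?_
  rw [Matrix.mul_diagonal]
  simp only [Matrix.smul_apply, outer, Matrix.of_apply, Matrix.conjTranspose_apply, smul_eq_mul,
    starRingEnd_apply]
  ring

lemma cols_unitary {n : ℕ} (v : Fin n → EuclideanSpace ℂ (Fin n)) (hv : Orthonormal ℂ v) :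
    (Matrix.of fun i j => v j i)ᴴ * (Matrix.of fun i j => v j i) =
      (1 : Matrix (Fin n) (Fin n) ℂ) := by
  ext a b
  have h := (orthonormal_iff_ite.mp hv) a b
  rw [PiLp.inner_apply] at h
  rw [Matrix.mul_apply, Matrix.one_apply, ← h]
  refine Finset.sum_congr rfl fun i _ => ?_
  simp [Matrix.conjTranspose_apply, mul_comm]

lemma frob_expand {n : ℕ} (D E : Matrix (Fin n) (Fin n) ℂ) (h : 0 ≤ (Dᴴ * E).trace.re) :
    frobNorm D ≤ frobNorm (D + E) := by
  unfold frobNorm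
  apply Real.sqrt_le_sqrt
  have h1 : ((D + E)ᴴ * (D + E)).trace.re =
      (Dᴴ * D).trace.re + (Dᴴ * E).trace.re + (Eᴴ * D).trace.re + (Eᴴ * E).trace.re := by
    simp only [Matrix.conjTranspose_add, add_mul, mul_add, Matrix.trace_add, Complex.add_re]
    ring
  have h2 : (Eᴴ * D).trace.re = (Dᴴ * E).trace.re := by
    have : Eᴴ * D = (Dᴴ * E)ᴴ := by simp
    rw [this, Matrix.trace_conjTranspose]
    simp
  have h3 : 0 ≤ (Eᴴ * E).trace.re :=
    (Complex.le_def.mp (Matrix.posSemidef_conjTranspose_mul_self E).trace_nonneg).1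
  linarith

/-- closed-form CP1 projection: for a Hermitian matrix
`X = ∑ ξᵢ |xᵢ⟩⟨xᵢ|` with orthonormal eigenvectors and a water-filling level `x₀` with
`∑ max(ξᵢ − x₀, 0) = 1`, the matrix `X' = ∑ max(ξᵢ − x₀, 0) |xᵢ⟩⟨xᵢ|` is a density matrix and a
minimizer of `‖X − X''‖₂` over all positive semidefinite trace-one matrices `X''`. -/
theorem cp1_projection_minimizer (n : ℕ)
    (X : Matrix (Fin n) (Fin n) ℂ) (hX : X.IsHermitian)
    (ξ : Fin n → ℝ) (v : Fin n → EuclideanSpace ℂ (Fin n)) (hv : Orthonormal ℂ v)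
    (hXeig : X = ∑ i, (ξ i : ℂ) • outer (v i))
    (x₀ : ℝ) (hx₀ : ∑ i, max (ξ i - x₀) 0 = 1) :
    IsDensity (∑ i, (↑(max (ξ i - x₀) 0) : ℂ) • outer (v i)) ∧
    ∀ X'' : Matrix (Fin n) (Fin n) ℂ, X''.PosSemidef → X''.trace = 1 →
      frobNorm (X - ∑ i, (↑(max (ξ i - x₀) 0) : ℂ) • outer (v i)) ≤
        frobNorm (X - X'') := by
  have hUU := cols_unitary v hv
  rw [sum_outer_eq v (fun i => (↑(max (ξ i - x₀) 0) : ℂ))]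
  rw [sum_outer_eq v (fun i => (ξ i : ℂ))] at hXeig
  generalize (Matrix.of fun i j => v j i : Matrix (Fin n) (Fin n) ℂ) = U at *
  have hp : ∀ i, 0 ≤ max (ξ i - x₀) 0 := fun i => le_max_right _ _
  have hpd : ∀ i, (ξ i - max (ξ i - x₀) 0 - x₀) * max (ξ i - x₀) 0 = 0 := by
    intro i
    rcases max_cases (ξ i - x₀) 0 with h | h <;> rw [h.1] <;> ring
  have hdx : ∀ i, ξ i - max (ξ i - x₀) 0 ≤ x₀ := by
    intro i
    linarith [le_max_left (ξ i - x₀) 0]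
  generalize hpp : (fun i => max (ξ i - x₀) 0) = p at *
  have hpi : ∀ i, max (ξ i - x₀) 0 = p i := fun i => congrFun hpp i
  simp only [hpi] at *
  refine ⟨⟨?_, ?_⟩, ?_⟩
  · apply Matrix.PosSemidef.mul_mul_conjTranspose_same
    exact Matrix.PosSemidef.diagonal (fun i => by simpa using hp i)
  · rw [Matrix.trace_mul_comm, ← mul_assoc, hUU, one_mul, Matrix.trace_diagonal]
    exact_mod_cast hx₀
  · intro Y hY hYt
    have hZ : (Uᴴ * Y * U).PosSemidef := hY.conjTranspose_mul_mul_same U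
    have hZt : (Uᴴ * Y * U).trace = 1 := by
      rw [Matrix.trace_mul_comm, ← mul_assoc, mul_eq_one_comm.mp hUU, one_mul, hYt]
    set P := U * Matrix.diagonal (fun i => (p i : ℂ)) * Uᴴ with hP
    have hD : X - P = U * Matrix.diagonal (fun i => ((ξ i - p i : ℝ) : ℂ)) * Uᴴ := by
      rw [hXeig, hP, ← sub_mul, ← mul_sub, Matrix.diagonal_sub]
      simp
    have hDh : (X - P)ᴴ = X - P := by
      rw [hD]
      simp only [Matrix.conjTranspose_mul, Matrix.conjTranspose_conjTranspose,
        Matrix.diagonal_conjTranspose, mul_assoc]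
      congr 3
      ext i
      simp
    have key : X - Y = (X - P) + (P - Y) := by abel
    rw [key]
    apply frob_expand
    rw [hDh]
    have ht : ((X - P) * (P - Y)).trace =
        ∑ i, ((ξ i - p i : ℝ) : ℂ) * ((p i : ℂ) - (Uᴴ * Y * U) i i) := by
      have e1 : Uᴴ * (P - Y) * U = Matrix.diagonal (fun i => (p i : ℂ)) - Uᴴ * Y * U := by
        rw [hP, mul_sub, sub_mul]
        congr 1
        calc _ = (Uᴴ * U) * Matrix.diagonal (fun i => (p i : ℂ)) * (Uᴴ * U) := by
              simp only [mul_assoc]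
          _ = _ := by rw [hUU]; simp
      rw [hD, mul_assoc, mul_assoc, Matrix.trace_mul_comm, mul_assoc, e1]
      simp [Matrix.trace, Matrix.diagonal_mul]
    rw [ht]
    have hz : ∀ i, 0 ≤ ((Uᴴ * Y * U) i i).re := fun i =>
      (Complex.le_def.mp (hZ.diag_nonneg (i := i))).1
    have hzs : ∑ i, ((Uᴴ * Y * U) i i).re = 1 := by
      have := congrArg Complex.re hZt
      simpa [Matrix.trace] using this
    rw [Complex.re_sum]
    simp only [Complex.re_ofReal_mul, Complex.sub_re, Complex.ofReal_re]
    have e : ∀ i, (ξ i - p i) * (p i - ((Uᴴ * Y * U) i i).re) =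
        x₀ * p i - x₀ * ((Uᴴ * Y * U) i i).re
          + (x₀ - (ξ i - p i)) * ((Uᴴ * Y * U) i i).re := by
      intro i
      linear_combination hpd i
    simp only [e]
    rw [Finset.sum_add_distrib, Finset.sum_sub_distrib, ← Finset.mul_sum, ← Finset.mul_sum,
      hx₀, hzs, sub_self, zero_add]
    exact Finset.sum_nonneg fun i _ => mul_nonneg (sub_nonneg.mpr (hdx i)) (hz i)
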